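/- Under the same hypotheses (commuting pairs (H₁⁰,H₂⁰), (H₁,H₂) with V_j = H_j − H_j⁰ ∈ B₂(𝓗), and finite-dimensional approximants H_j^{0(N)}, H_j^{(N)} with projections P_N⁰, P_N from the Weyl–von Neumann–Berg construction), for j = 1,2: ‖P_N (H_j^{(N)} − H_j^{0(N)}) P_N⁰ − P_N V_j P_N⁰‖₂ → 0 as N → ∞; in particular sup_N ‖P_N (H_j^{(N)} − H_j^{0(N)}) P_N⁰‖₂ < ∞. -/

import Mathlib

open MeasureTheory Filter Topology

noncomputable section

/-- The trace computed along a Hilbert basis: `Tr T = Σ_i ⟪b i, T (b i)⟫`. -/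
def traceAlong {H : Type*} [NormedAddCommGroup H] [InnerProductSpace ℂ H] [CompleteSpace H]
    {ι : Type*} (b : HilbertBasis ι ℂ H) (T : H →L[ℂ] H) : ℂ :=
  ∑' i, (inner ℂ (b i) (T (b i)) : ℂ)

/-- The Schatten `p`-norm `‖T‖_p = (Tr |T|^p)^{1/p}`, via the functional calculus
`|T|^p = f(T*T)`, `f(t) = |t|^{p/2}`, with the trace computed along the basis `b`. -/
def schattenNorm {H : Type*} [NormedAddCommGroup H] [InnerProductSpace ℂ H] [CompleteSpace H]
    {ι : Type*} (b : HilbertBasis ι ℂ H) (p : ℝ) (T : H →L[ℂ] H) : ℝ :=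
  (∑' i, (inner ℂ (b i)
      ((cfc (fun t : ℝ => |t| ^ (p / 2)) (ContinuousLinearMap.adjoint T * T)) (b i)) : ℂ).re)
    ^ (1 / p)

/-!
Write `P`, `P₀` for the projections, `K`, `K₀` for the operators and `K'`, `K₀'` for their
approximants. Because `P² = P` and `P₀² = P₀`, the error splits exactly as
`P(K' - K₀')P₀ - P(K - K₀)P₀ = P[K, P]P₀ - (PKP - PK')P₀ + P(P₀K₀P₀ - K₀'P₀) + P[K₀, P₀]P₀`,
and `PKP - PK'` is the adjoint of `PKP - K'P`. Since the Hilbert–Schmidt norm is invariant under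
adjoints and does not increase under multiplication by contractions, the error is at most the sum
of the four approximation errors. The bound follows, because `‖P(K - K₀)P₀‖₂ ≤ ‖K - K₀‖₂`.

A divergent sum gives `schattenNorm` the junk value `0`, so the estimates are made for an
extended-real-valued norm, and are transferred to `schattenNorm` by finiteness of the rank.
-/

open scoped ENNReal InnerProductSpace

section HilbertSchmidt

variable {𝕜 ι κ E F G : Type*} [RCLike 𝕜] [NormedAddCommGroup E] [InnerProductSpace 𝕜 E]

/-- The Hilbert–Schmidt norm `(∑ i, ‖T (b i)‖²)^(1/2)` along a Hilbert basis of the domain. It takes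
the value `∞` exactly on the operators that are not Hilbert–Schmidt. -/
def hsENorm [NormedAddCommGroup F] [NormedSpace 𝕜 F] (b : HilbertBasis ι 𝕜 E) (T : E →L[𝕜] F) :
    ℝ≥0∞ :=
  (∑' i, ‖T (b i)‖ₑ ^ 2) ^ (1 / 2 : ℝ)

lemma ennreal_tsum_Lp_add_le {p : ℝ} (hp : 1 ≤ p) (f g : ι → ℝ≥0∞) :
    (∑' i, (f i + g i) ^ p) ^ (1 / p) ≤ (∑' i, f i ^ p) ^ (1 / p) + (∑' i, g i ^ p) ^ (1 / p) := by
  let : MeasurableSpace ι := ⊤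
  simpa only [lintegral_count, Pi.add_apply] using
    ENNReal.lintegral_Lp_add_le (μ := .count) (f := f) (g := g)
      measurable_from_top.aemeasurable measurable_from_top.aemeasurable hp

section NormedTarget

variable [NormedAddCommGroup F] [NormedSpace 𝕜 F] [NormedAddCommGroup G] [NormedSpace 𝕜 G]
  (b : HilbertBasis ι 𝕜 E)

lemma hsENorm_zero : hsENorm b (0 : E →L[𝕜] F) = 0 := by
  simp [hsENorm]

lemma hsENorm_neg (T : E →L[𝕜] F) : hsENorm b (-T) = hsENorm b T := by
  simp only [hsENorm, neg_apply, enorm_neg]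

lemma hsENorm_add_le (S T : E →L[𝕜] F) : hsENorm b (S + T) ≤ hsENorm b S + hsENorm b T := by
  have minkowski := ennreal_tsum_Lp_add_le one_le_two (fun i => ‖S (b i)‖ₑ) (fun i => ‖T (b i)‖ₑ)
  simp only [ENNReal.rpow_two] at minkowski
  refine le_trans ?_ minkowski
  unfold hsENorm
  gcongr with i
  exact enorm_add_le _ _

lemma hsENorm_sub_le (S T : E →L[𝕜] F) : hsENorm b (S - T) ≤ hsENorm b S + hsENorm b T := by
  simpa only [sub_eq_add_neg, hsENorm_neg] using hsENorm_add_le b S (-T)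

lemma hsENorm_comp_le_enorm_mul (A : F →L[𝕜] G) (T : E →L[𝕜] F) :
    hsENorm b (A ∘L T) ≤ ‖A‖ₑ * hsENorm b T :=
  calc hsENorm b (A ∘L T)
    _ ≤ (∑' i, (‖A‖ₑ * ‖T (b i)‖ₑ) ^ 2) ^ (1 / 2 : ℝ) := by
      unfold hsENorm
      gcongr with i
      exact A.le_opENorm _
    _ = (‖A‖ₑ ^ (2 : ℝ)) ^ (1 / 2 : ℝ) * hsENorm b T := by
      simp only [hsENorm, mul_pow, ENNReal.tsum_mul_left, ENNReal.rpow_two]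
      exact ENNReal.mul_rpow_of_nonneg _ _ (by norm_num)
    _ = ‖A‖ₑ * hsENorm b T := by
      rw [← ENNReal.rpow_mul]
      norm_num

lemma hsENorm_ne_top_iff_summable (T : E →L[𝕜] F) :
    hsENorm b T ≠ ∞ ↔ Summable fun i => ‖T (b i)‖ ^ 2 := by
  have hpow : (fun i => ‖T (b i)‖ ^ 2) = fun i => ((‖T (b i)‖₊ ^ 2 : NNReal) : ℝ) := by
    simp only [NNReal.coe_pow, coe_nnnorm]
  rw [hpow, NNReal.summable_coe, ← ENNReal.tsum_coe_ne_top_iff_summable, hsENorm, ne_eq,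
    ENNReal.rpow_eq_top_iff_of_pos (by norm_num)]
  simp only [enorm_eq_nnnorm, ENNReal.coe_pow, ne_eq]

end NormedTarget

section HilbertTarget

variable [NormedAddCommGroup F] [InnerProductSpace 𝕜 F] [NormedAddCommGroup G]
  [InnerProductSpace 𝕜 G]

lemma enorm_sq_eq_ofReal_norm_sq {V : Type*} [SeminormedAddGroup V] (v : V) :
    ‖v‖ₑ ^ 2 = ENNReal.ofReal (‖v‖ ^ 2) := by
  rw [ENNReal.ofReal_pow (norm_nonneg v), ofReal_norm]

lemma enorm_sq_eq_tsum_enorm_inner_sq (b : HilbertBasis ι 𝕜 E) (x : E) :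
    ‖x‖ₑ ^ 2 = ∑' i, ‖⟪b i, x⟫_𝕜‖ₑ ^ 2 := by
  have parseval : HasSum (fun i => ‖⟪b i, x⟫_𝕜‖ ^ 2) (‖x‖ ^ 2) := by
    simpa [b.repr_apply_apply] using lp.hasSum_norm (p := 2) (by norm_num) (b.repr x)
  simp only [enorm_sq_eq_ofReal_norm_sq, ← parseval.tsum_eq]
  exact ENNReal.ofReal_tsum_of_nonneg (fun _ => sq_nonneg _) parseval.summable

variable [CompleteSpace E]

lemma hsENorm_adjoint [CompleteSpace F] (b : HilbertBasis ι 𝕜 E) (c : HilbertBasis κ 𝕜 F)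
    (T : E →L[𝕜] F) : hsENorm c (ContinuousLinearMap.adjoint T) = hsENorm b T := by
  unfold hsENorm
  congr 1
  simp only [enorm_sq_eq_tsum_enorm_inner_sq b (ContinuousLinearMap.adjoint T _),
    enorm_sq_eq_tsum_enorm_inner_sq c (T _), ContinuousLinearMap.adjoint_inner_right]
  rw [ENNReal.tsum_comm]
  simp only [← ofReal_norm, norm_inner_symm (T _)]

lemma hsENorm_comp_le_mul_enorm [CompleteSpace F] [CompleteSpace G] (b : HilbertBasis ι 𝕜 E)
    (c : HilbertBasis κ 𝕜 F) (T : F →L[𝕜] G) (A : E →L[𝕜] F) :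
    hsENorm b (T ∘L A) ≤ hsENorm c T * ‖A‖ₑ := by
  obtain ⟨_, d, -⟩ := exists_hilbertBasis 𝕜 G
  have h :=
    hsENorm_comp_le_enorm_mul d (ContinuousLinearMap.adjoint A) (ContinuousLinearMap.adjoint T)
  rwa [← ContinuousLinearMap.adjoint_comp, hsENorm_adjoint b, hsENorm_adjoint c, mul_comm,
    ← ofReal_norm, LinearIsometryEquiv.norm_map, ofReal_norm] at h

lemma hsENorm_ne_top_of_finiteDimensional_range (b : HilbertBasis ι 𝕜 E) (T : E →L[𝕜] F)
    [FiniteDimensional 𝕜 T.range] : hsENorm b T ≠ ∞ := by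
  -- Passing to the adjoint of `T : E → range T` replaces the sum along `b` by a finite sum.
  let e := (stdOrthonormalBasis 𝕜 T.range).toHilbertBasis
  have hrestrict : hsENorm b T = hsENorm b T.rangeRestrict := rfl
  rw [hrestrict, ← hsENorm_adjoint b e, hsENorm_ne_top_iff_summable]
  exact Summable.of_finite

end HilbertTarget

section Endomorphisms

variable [CompleteSpace E] (b : HilbertBasis ι 𝕜 E)

/-- The ideal `B₂` of Hilbert–Schmidt operators, cut out by finiteness of the Hilbert–Schmidt norm
along `b`. -/
def hilbertSchmidtIdeal : TwoSidedIdeal (E →L[𝕜] E) :=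
  .mk' {T | hsENorm b T ≠ ∞}
    (by simp [hsENorm_zero])
    (fun hS hT => ne_top_of_le_ne_top (ENNReal.add_ne_top.2 ⟨hS, hT⟩) (hsENorm_add_le b _ _))
    (fun hT => by simpa only [Set.mem_ofPred_eq, hsENorm_neg] using hT)
    (fun hT => ne_top_of_le_ne_top (ENNReal.mul_ne_top enorm_ne_top hT)
      (hsENorm_comp_le_enorm_mul b _ _))
    (fun hT => ne_top_of_le_ne_top (ENNReal.mul_ne_top hT enorm_ne_top)
      (hsENorm_comp_le_mul_enorm b b _ _))

lemma mem_hilbertSchmidtIdeal {T : E →L[𝕜] E} : T ∈ hilbertSchmidtIdeal b ↔ hsENorm b T ≠ ∞ :=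
  TwoSidedIdeal.mem_mk' _ _ _ _ _ _ _

lemma hsENorm_mul_mul_le_of_enorm_le_one {A B : E →L[𝕜] E} (hA : ‖A‖ₑ ≤ 1) (hB : ‖B‖ₑ ≤ 1)
    (T : E →L[𝕜] E) : hsENorm b (A * T * B) ≤ hsENorm b T :=
  calc hsENorm b (A * T * B)
    _ ≤ hsENorm b (A * T) * ‖B‖ₑ := hsENorm_comp_le_mul_enorm b b (A * T) B
    _ ≤ ‖A‖ₑ * hsENorm b T * ‖B‖ₑ := by gcongr; exact hsENorm_comp_le_enorm_mul b A T
    _ ≤ 1 * hsENorm b T * 1 := by gcongr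
    _ = hsENorm b T := by rw [one_mul, mul_one]

lemma enorm_le_one_of_isStarProjection {R : Type*} [NonUnitalNormedRing R] [StarRing R]
    [CStarRing R] {p : R} (hp : IsStarProjection p) : ‖p‖ₑ ≤ 1 := by
  rw [← ofReal_norm]
  exact ENNReal.ofReal_le_one.2 hp.norm_le

lemma compression_sub_compression_eq {R : Type*} [NonUnitalRing R] {p p₀ : R}
    (hp : IsIdempotentElem p) (hp₀ : IsIdempotentElem p₀) (k k₀ k' k₀' : R) :
    p * (k' - k₀') * p₀ - p * (k - k₀) * p₀ =
      p * (k * p - p * k) * p₀ - (p * k * p - p * k') * p₀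
        + p * (p₀ * k₀ * p₀ - k₀' * p₀) + p * (k₀ * p₀ - p₀ * k₀) * p₀ := by
  have left : p * (k * p - p * k) = p * k * p - p * k := by
    rw [mul_sub, ← mul_assoc, ← mul_assoc, hp.eq]
  have right : p * (k₀ * p₀ - p₀ * k₀) * p₀ = p * (k₀ * p₀ - p₀ * k₀ * p₀) := by
    rw [mul_assoc, sub_mul, mul_assoc k₀, hp₀.eq]
  rw [left, right]
  simp only [mul_sub, sub_mul, mul_assoc]
  abel

lemma hsENorm_compression_sub_le {P P₀ K K' : E →L[𝕜] E} (hP : IsStarProjection P)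
    (hP₀ : IsStarProjection P₀) (hK : IsSelfAdjoint K) (hK' : IsSelfAdjoint K')
    (K₀ K₀' : E →L[𝕜] E) :
    hsENorm b (P * (K' - K₀') * P₀ - P * (K - K₀) * P₀) ≤
      hsENorm b (K * P - P * K) + hsENorm b (P * K * P - K' * P)
        + hsENorm b (P₀ * K₀ * P₀ - K₀' * P₀) + hsENorm b (K₀ * P₀ - P₀ * K₀) := by
  have hadjoint : P * K * P - P * K' = ContinuousLinearMap.adjoint (P * K * P - K' * P) := by
    rw [← ContinuousLinearMap.star_eq_adjoint]
    simp only [star_sub, star_mul, hP.isSelfAdjoint.star_eq, hK.star_eq, hK'.star_eq, mul_assoc]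
  have hP_le := enorm_le_one_of_isStarProjection hP
  have hP₀_le := enorm_le_one_of_isStarProjection hP₀
  have hone_le := enorm_le_one_of_isStarProjection (.one (R := E →L[𝕜] E))
  rw [compression_sub_compression_eq hP.isIdempotentElem hP₀.isIdempotentElem]
  refine (hsENorm_add_le b _ _).trans (add_le_add ((hsENorm_add_le b _ _).trans
    (add_le_add ((hsENorm_sub_le b _ _).trans (add_le_add ?_ ?_)) ?_)) ?_)
  · exact hsENorm_mul_mul_le_of_enorm_le_one b hP_le hP₀_le _
  · rw [← hsENorm_adjoint b b (P * K * P - K' * P), ← hadjoint]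
    simpa only [one_mul] using hsENorm_mul_mul_le_of_enorm_le_one b hone_le hP₀_le _
  · simpa only [mul_one] using hsENorm_mul_mul_le_of_enorm_le_one b hP_le hone_le _
  · exact hsENorm_mul_mul_le_of_enorm_le_one b hP_le hP₀_le _

end Endomorphisms

end HilbertSchmidt

section SchattenNorm

variable {ι H : Type*} [NormedAddCommGroup H] [InnerProductSpace ℂ H] [CompleteSpace H]
  (b : HilbertBasis ι ℂ H)

lemma cfc_abs_rpow_one_of_nonneg {A : Type*} [CStarAlgebra A] [PartialOrder A] [StarOrderedRing A]
    {a : A} (ha : 0 ≤ a) : cfc (fun t : ℝ => |t| ^ (1 : ℝ)) a = a :=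
  calc cfc (fun t : ℝ => |t| ^ (1 : ℝ)) a
    _ = cfc id a := cfc_congr fun t ht => by
      simp only [Real.rpow_one, abs_of_nonneg (spectrum_nonneg_of_nonneg ha ht), id]
    _ = a := cfc_id ℝ a (.of_nonneg ha)

lemma schattenNorm_two_eq_toReal_hsENorm (T : H →L[ℂ] H) :
    schattenNorm b 2 T = (hsENorm b T).toReal := by
  have hnonneg : 0 ≤ ContinuousLinearMap.adjoint T * T :=
    (ContinuousLinearMap.nonneg_iff_isPositive _).2
      (ContinuousLinearMap.isPositive_adjoint_comp_self T)
  rw [schattenNorm, hsENorm, div_self two_ne_zero, cfc_abs_rpow_one_of_nonneg hnonneg,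
    ← ENNReal.toReal_rpow, ENNReal.tsum_toReal_eq fun i => by finiteness]
  congr 1
  refine tsum_congr fun i => ?_
  rw [ENNReal.toReal_pow, toReal_enorm]
  exact (ContinuousLinearMap.apply_norm_sq_eq_inner_adjoint_right T (b i)).symm

lemma tendsto_schattenNorm_two_zero_iff {α : Type*} {l : Filter α} {T : α → H →L[ℂ] H}
    (hT : ∀ a, T a ∈ hilbertSchmidtIdeal b) :
    Tendsto (fun a => schattenNorm b 2 (T a)) l (𝓝 0) ↔
      Tendsto (fun a => hsENorm b (T a)) l (𝓝 0) := by
  simp only [schattenNorm_two_eq_toReal_hsENorm]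
  exact ENNReal.tendsto_toReal_iff (fun a => (mem_hilbertSchmidtIdeal b).1 (hT a))
    ENNReal.zero_ne_top

lemma schattenNorm_two_add_le {S T : H →L[ℂ] H} (hS : S ∈ hilbertSchmidtIdeal b)
    (hT : T ∈ hilbertSchmidtIdeal b) :
    schattenNorm b 2 (S + T) ≤ schattenNorm b 2 S + schattenNorm b 2 T := by
  rw [mem_hilbertSchmidtIdeal] at hS hT
  simp only [schattenNorm_two_eq_toReal_hsENorm]
  exact ENNReal.toReal_le_add (hsENorm_add_le b S T) hS hT

lemma schattenNorm_two_mul_mul_le_of_enorm_le_one {A B T : H →L[ℂ] H} (hA : ‖A‖ₑ ≤ 1)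
    (hB : ‖B‖ₑ ≤ 1) (hT : T ∈ hilbertSchmidtIdeal b) :
    schattenNorm b 2 (A * T * B) ≤ schattenNorm b 2 T := by
  simp only [schattenNorm_two_eq_toReal_hsENorm]
  exact ENNReal.toReal_mono ((mem_hilbertSchmidtIdeal b).1 hT)
    (hsENorm_mul_mul_le_of_enorm_le_one b hA hB T)

theorem tendsto_schattenNorm_two_compression_sub {α : Type*} {l : Filter α}
    {P P₀ K' K₀' : α → H →L[ℂ] H} {K K₀ : H →L[ℂ] H}
    (hP : ∀ a, IsStarProjection (P a)) (hP₀ : ∀ a, IsStarProjection (P₀ a))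
    (hPHS : ∀ a, P a ∈ hilbertSchmidtIdeal b) (hP₀HS : ∀ a, P₀ a ∈ hilbertSchmidtIdeal b)
    (hK : IsSelfAdjoint K) (hK' : ∀ a, IsSelfAdjoint (K' a))
    (hcomm₀ : Tendsto (fun a => schattenNorm b 2 (K₀ * P₀ a - P₀ a * K₀)) l (𝓝 0))
    (happrox₀ : Tendsto (fun a => schattenNorm b 2 (P₀ a * K₀ * P₀ a - K₀' a * P₀ a)) l (𝓝 0))
    (hcomm : Tendsto (fun a => schattenNorm b 2 (K * P a - P a * K)) l (𝓝 0))
    (happrox : Tendsto (fun a => schattenNorm b 2 (P a * K * P a - K' a * P a)) l (𝓝 0)) :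
    Tendsto (fun a => schattenNorm b 2 (P a * (K' a - K₀' a) * P₀ a - P a * (K - K₀) * P₀ a))
      l (𝓝 0) := by
  let I := hilbertSchmidtIdeal b
  rw [tendsto_schattenNorm_two_zero_iff b fun a =>
    I.sub_mem (I.mul_mem_left _ _ (hP₀HS a)) (I.mul_mem_right _ _ (hP₀HS a))] at hcomm₀
  rw [tendsto_schattenNorm_two_zero_iff b fun a =>
    I.sub_mem (I.mul_mem_left _ _ (hP₀HS a)) (I.mul_mem_left _ _ (hP₀HS a))] at happrox₀
  rw [tendsto_schattenNorm_two_zero_iff b fun a =>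
    I.sub_mem (I.mul_mem_left _ _ (hPHS a)) (I.mul_mem_right _ _ (hPHS a))] at hcomm
  rw [tendsto_schattenNorm_two_zero_iff b fun a =>
    I.sub_mem (I.mul_mem_left _ _ (hPHS a)) (I.mul_mem_left _ _ (hPHS a))] at happrox
  rw [tendsto_schattenNorm_two_zero_iff b fun a =>
    I.sub_mem (I.mul_mem_left _ _ (hP₀HS a)) (I.mul_mem_left _ _ (hP₀HS a))]
  have herrors := ((hcomm.add happrox).add happrox₀).add hcomm₀
  simp only [add_zero] at herrors
  exact tendsto_of_tendsto_of_tendsto_of_le_of_le tendsto_const_nhds herrors (fun _ => zero_le)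
    fun a => hsENorm_compression_sub_le b (hP a) (hP₀ a) hK (hK' a) K₀ (K₀' a)

theorem stmt17_general {P P₀ K' K₀' : ℕ → H →L[ℂ] H} {K K₀ : H →L[ℂ] H}
    (hP : ∀ N, IsStarProjection (P N)) (hP₀ : ∀ N, IsStarProjection (P₀ N))
    (hPfin : ∀ N, FiniteDimensional ℂ (P N).range)
    (hP₀fin : ∀ N, FiniteDimensional ℂ (P₀ N).range)
    (hK : IsSelfAdjoint K) (hK' : ∀ N, IsSelfAdjoint (K' N))
    (hV : Summable fun i => ‖(K - K₀) (b i)‖ ^ 2)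
    (hcomm₀ : Tendsto (fun N => schattenNorm b 2 (K₀ * P₀ N - P₀ N * K₀)) atTop (𝓝 0))
    (happrox₀ : Tendsto (fun N => schattenNorm b 2 (P₀ N * K₀ * P₀ N - K₀' N * P₀ N)) atTop (𝓝 0))
    (hcomm : Tendsto (fun N => schattenNorm b 2 (K * P N - P N * K)) atTop (𝓝 0))
    (happrox : Tendsto (fun N => schattenNorm b 2 (P N * K * P N - K' N * P N)) atTop (𝓝 0)) :
    Tendsto (fun N => schattenNorm b 2 (P N * (K' N - K₀' N) * P₀ N - P N * (K - K₀) * P₀ N))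
        atTop (𝓝 0) ∧
      ∃ C : ℝ, ∀ N, schattenNorm b 2 (P N * (K' N - K₀' N) * P₀ N) ≤ C := by
  let I := hilbertSchmidtIdeal b
  have hPHS N : P N ∈ I :=
    (mem_hilbertSchmidtIdeal b).2 (hsENorm_ne_top_of_finiteDimensional_range b (P N))
  have hP₀HS N : P₀ N ∈ I :=
    (mem_hilbertSchmidtIdeal b).2 (hsENorm_ne_top_of_finiteDimensional_range b (P₀ N))
  have hVHS : K - K₀ ∈ I :=
    (mem_hilbertSchmidtIdeal b).2 ((hsENorm_ne_top_iff_summable b _).2 hV)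
  have hlim := tendsto_schattenNorm_two_compression_sub b hP hP₀ hPHS hP₀HS hK hK'
    hcomm₀ happrox₀ hcomm happrox
  obtain ⟨C, hC⟩ := hlim.bddAbove_range
  refine ⟨hlim, C + schattenNorm b 2 (K - K₀), fun N => ?_⟩
  have hVcompr : P N * (K - K₀) * P₀ N ∈ I := I.mul_mem_left _ _ (hP₀HS N)
  have herror : P N * (K' N - K₀' N) * P₀ N - P N * (K - K₀) * P₀ N ∈ I :=
    I.sub_mem (I.mul_mem_left _ _ (hP₀HS N)) hVcompr
  calc schattenNorm b 2 (P N * (K' N - K₀' N) * P₀ N)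
    _ = schattenNorm b 2 (P N * (K' N - K₀' N) * P₀ N - P N * (K - K₀) * P₀ N
          + P N * (K - K₀) * P₀ N) := by rw [sub_add_cancel]
    _ ≤ schattenNorm b 2 (P N * (K' N - K₀' N) * P₀ N - P N * (K - K₀) * P₀ N)
          + schattenNorm b 2 (P N * (K - K₀) * P₀ N) := schattenNorm_two_add_le b herror hVcompr
    _ ≤ C + schattenNorm b 2 (K - K₀) :=
      add_le_add (hC ⟨N, rfl⟩) (schattenNorm_two_mul_mul_le_of_enorm_le_one b
        (enorm_le_one_of_isStarProjection (hP N)) (enorm_le_one_of_isStarProjection (hP₀ N)) hVHS)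

end SchattenNorm

/-- Under the same hypotheses, for `j = 1,2`:
`‖P_N(H_j^{(N)} − H_j^{0(N)})P_N⁰ − P_N V_j P_N⁰‖₂ → 0` as `N → ∞`; in particular
`sup_N ‖P_N(H_j^{(N)} − H_j^{0(N)})P_N⁰‖₂ < ∞`. -/
theorem stmt17
 {H : Type*} [NormedAddCommGroup H] [InnerProductSpace ℂ H] [CompleteSpace H]
    [TopologicalSpace.SeparableSpace H]
    (b : HilbertBasis ℕ ℂ H)
    (H10 H20 H1 H2 : H →L[ℂ] H)
    (h10sa : IsSelfAdjoint H10) (h20sa : IsSelfAdjoint H20)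
    (h1sa : IsSelfAdjoint H1) (h2sa : IsSelfAdjoint H2)
    (hcomm0 : Commute H10 H20) (hcomm : Commute H1 H2)
    (hV1 : Summable fun i => ‖(H1 - H10) (b i)‖ ^ 2)
    (hV2 : Summable fun i => ‖(H2 - H20) (b i)‖ ^ 2)
    (P0 P : ℕ → H →L[ℂ] H)
    (hP0proj : ∀ N, P0 N * P0 N = P0 N) (hP0sa : ∀ N, IsSelfAdjoint (P0 N))
    (hP0fin : ∀ N, FiniteDimensional ℂ (LinearMap.range (P0 N : H →ₗ[ℂ] H)))
    (hP0mono : ∀ N, LinearMap.range (P0 N : H →ₗ[ℂ] H)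
      ≤ LinearMap.range (P0 (N + 1) : H →ₗ[ℂ] H))
    (hP0lim : ∀ x : H, Tendsto (fun N => P0 N x) atTop (𝓝 x))
    (hPproj : ∀ N, P N * P N = P N) (hPsa : ∀ N, IsSelfAdjoint (P N))
    (hPfin : ∀ N, FiniteDimensional ℂ (LinearMap.range (P N : H →ₗ[ℂ] H)))
    (hPmono : ∀ N, LinearMap.range (P N : H →ₗ[ℂ] H)
      ≤ LinearMap.range (P (N + 1) : H →ₗ[ℂ] H))
    (hPlim : ∀ x : H, Tendsto (fun N => P N x) atTop (𝓝 x))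
    (H10N H20N H1N H2N : ℕ → H →L[ℂ] H)
    (h10Nsa : ∀ N, IsSelfAdjoint (H10N N)) (h20Nsa : ∀ N, IsSelfAdjoint (H20N N))
    (h1Nsa : ∀ N, IsSelfAdjoint (H1N N)) (h2Nsa : ∀ N, IsSelfAdjoint (H2N N))
    (hcomm0N : ∀ N, Commute (H10N N) (H20N N)) (hcommN : ∀ N, Commute (H1N N) (H2N N))
    (hsub0 : ∀ N, P0 N * H10N N * P0 N = H10N N * P0 N
      ∧ P0 N * H20N N * P0 N = H20N N * P0 N)
    (hsub : ∀ N, P N * H1N N * P N = H1N N * P N ∧ P N * H2N N * P N = H2N N * P N)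
    (happrox0 : ∀ p : ℝ, 2 ≤ p →
      Tendsto (fun N => schattenNorm b p (H10 * P0 N - P0 N * H10)) atTop (𝓝 0) ∧
      Tendsto (fun N => schattenNorm b p (H20 * P0 N - P0 N * H20)) atTop (𝓝 0) ∧
      Tendsto (fun N => schattenNorm b p (P0 N * H10 * P0 N - H10N N * P0 N)) atTop (𝓝 0) ∧
      Tendsto (fun N => schattenNorm b p (P0 N * H20 * P0 N - H20N N * P0 N)) atTop (𝓝 0))
    (happrox : ∀ p : ℝ, 2 ≤ p →
      Tendsto (fun N => schattenNorm b p (H1 * P N - P N * H1)) atTop (𝓝 0) ∧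
      Tendsto (fun N => schattenNorm b p (H2 * P N - P N * H2)) atTop (𝓝 0) ∧
      Tendsto (fun N => schattenNorm b p (P N * H1 * P N - H1N N * P N)) atTop (𝓝 0) ∧
      Tendsto (fun N => schattenNorm b p (P N * H2 * P N - H2N N * P N)) atTop (𝓝 0))
    : (Tendsto (fun N =>
          schattenNorm b 2 (P N * (H1N N - H10N N) * P0 N - P N * (H1 - H10) * P0 N))
        atTop (𝓝 0)) ∧
      (Tendsto (fun N =>
          schattenNorm b 2 (P N * (H2N N - H20N N) * P0 N - P N * (H2 - H20) * P0 N))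
        atTop (𝓝 0)) ∧
      (∃ C : ℝ, ∀ N,
        schattenNorm b 2 (P N * (H1N N - H10N N) * P0 N) ≤ C ∧
        schattenNorm b 2 (P N * (H2N N - H20N N) * P0 N) ≤ C) := by
  have hP0 N : IsStarProjection (P0 N) := ⟨hP0proj N, hP0sa N⟩
  have hP N : IsStarProjection (P N) := ⟨hPproj N, hPsa N⟩
  obtain ⟨hcomm10, hcomm20, happrox10, happrox20⟩ := happrox0 2 le_rfl
  obtain ⟨hcomm1, hcomm2, happrox1, happrox2⟩ := happrox 2 le_rfl
  obtain ⟨hlim1, C1, hC1⟩ := stmt17_general b hP hP0 hPfin hP0fin h1sa h1Nsa hV1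
    hcomm10 happrox10 hcomm1 happrox1
  obtain ⟨hlim2, C2, hC2⟩ := stmt17_general b hP hP0 hPfin hP0fin h2sa h2Nsa hV2
    hcomm20 happrox20 hcomm2 happrox2
  exact ⟨hlim1, hlim2, max C1 C2, fun N => ⟨le_max_of_le_left (hC1 N), le_max_of_le_right (hC2 N)⟩⟩

end
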